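/- Classical information causality inequality (two inputs): let X1, X2, A be mutually independent finite random variables, let Z = f(X1, X2, A) for a deterministic function f, and let Y1 = g1(Z, A) and Y2 = g2(Z, A) for deterministic functions g1, g2. Then I(X1 : Y1) + I(X2 : Y2) ≤ H(Z), where I denotes mutual information and H the Shannon entropy. -/

import Mathlib

open MeasureTheory ProbabilityTheory

/-- Shannon entropy of a finite-valued random variable `X` under the measure `μ`. -/
noncomputable def entH {Ω E : Type*} [MeasurableSpace Ω] [Fintype E]
    (μ : Measure Ω) (X : Ω → E) : ℝ :=
  ∑ e : E, Real.negMulLog (μ (X ⁻¹' {e})).toReal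

/-- Mutual information `I(X : Y)`. -/
noncomputable def mutInf {Ω E F : Type*} [MeasurableSpace Ω] [Fintype E] [Fintype F]
    (μ : Measure Ω) (X : Ω → E) (Y : Ω → F) : ℝ :=
  entH μ X + entH μ Y - entH μ (fun ω => (X ω, Y ω))

/-- Conditional Shannon entropy `H(X | Y)`. -/
noncomputable def condEnt {Ω E F : Type*} [MeasurableSpace Ω] [Fintype E] [Fintype F]
    (μ : Measure Ω) (X : Ω → E) (Y : Ω → F) : ℝ :=
  entH μ (fun ω => (X ω, Y ω)) - entH μ Y

/-- Conditional mutual information `I(X : Y | Z)`. -/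
noncomputable def condMutInf {Ω E F G : Type*} [MeasurableSpace Ω]
    [Fintype E] [Fintype F] [Fintype G]
    (μ : Measure Ω) (X : Ω → E) (Y : Ω → F) (Z : Ω → G) : ℝ :=
  entH μ (fun ω => (X ω, Z ω)) + entH μ (fun ω => (Y ω, Z ω))
    - entH μ (fun ω => (X ω, Y ω, Z ω)) - entH μ Z

/-!
The Shannon inequalities needed all come from the single one `0 ≤ I(X : Y | Z)`. Both `Y1` and `Y2`
are functions of `(Z, A)`, so by data processing they may be replaced by `(Z, A)`. As `X1` and `X2`
are independent, the two informations then add up to at most `I((X1, X2) : (Z, A))`. This is at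
most `H(Z)`, because `A` alone carries no information about `(X1, X2)` and adjoining `Z` to it adds
at most `H(Z)`.
-/

open Real (negMulLog log)

lemma negMulLog_add_mul_log_le {p r s t : ℝ} (hp : 0 ≤ p) (hpr : p ≤ r) (hps : p ≤ s)
    (hpt : p ≤ t) : negMulLog p + p * (log r + log s - log t) ≤ r * s / t - p := by
  rcases hp.eq_or_lt with rfl | hp
  · simpa using div_nonneg (mul_nonneg hpr hps) hpt
  have hr : 0 < r := hp.trans_le hpr
  have hs : 0 < s := hp.trans_le hps
  have ht : 0 < t := hp.trans_le hpt
  calc negMulLog p + p * (log r + log s - log t) = p * log (r * s / t / p) := by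
        rw [Real.log_div (by positivity) hp.ne', Real.log_div (by positivity) ht.ne',
          Real.log_mul hr.ne' hs.ne', negMulLog]
        ring
    _ ≤ p * (r * s / t / p - 1) := by
        gcongr
        exact Real.log_le_sub_one_of_pos (by positivity)
    _ = r * s / t - p := by field_simp

/- Gibbs' inequality: the relative entropy of `p` with respect to the product of its marginals,
rescaled to the mass of `p`, is nonnegative. -/
lemma sum_negMulLog_add_negMulLog_sum_le {α β : Type*} [Fintype α] [Fintype β] {p : α → β → ℝ}
    (hp : ∀ a b, 0 ≤ p a b) :
    ∑ a, ∑ b, negMulLog (p a b) + negMulLog (∑ a, ∑ b, p a b)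
      ≤ ∑ a, negMulLog (∑ b, p a b) + ∑ b, negMulLog (∑ a, p a b) := by
  set r : α → ℝ := fun a => ∑ b, p a b
  set s : β → ℝ := fun b => ∑ a, p a b
  set t : ℝ := ∑ a, r a
  have hpr (a : α) (b : β) : p a b ≤ r a :=
    Finset.single_le_sum (fun b _ => hp a b) (Finset.mem_univ b)
  have hps (a : α) (b : β) : p a b ≤ s b :=
    Finset.single_le_sum (fun a _ => hp a b) (Finset.mem_univ a)
  have hrt (a : α) : r a ≤ t :=
    Finset.single_le_sum (fun a _ => Finset.sum_nonneg fun b _ => hp a b) (Finset.mem_univ a)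
  have gibbs : ∑ a, ∑ b, (negMulLog (p a b) + p a b * (log (r a) + log (s b) - log t))
      ≤ ∑ a, ∑ b, (r a * s b / t - p a b) := by
    gcongr with a _ b
    exact negMulLog_add_mul_log_le (hp a b) (hpr a b) (hps a b) ((hpr a b).trans (hrt a))
  have mass_eq : ∑ a, ∑ b, (r a * s b / t - p a b) = 0 := by
    have hst : ∑ b, s b = t := Finset.sum_comm
    simp only [Finset.sum_sub_distrib, ← Finset.sum_div, ← Finset.mul_sum, ← Finset.sum_mul, hst]
    exact sub_eq_zero.2 (mul_self_div_self t)
  have entropy_eq : ∑ a, ∑ b, (negMulLog (p a b) + p a b * (log (r a) + log (s b) - log t))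
      = ∑ a, ∑ b, negMulLog (p a b) + negMulLog t
        - ∑ a, negMulLog (r a) - ∑ b, negMulLog (s b) := by
    have hs : ∑ a, ∑ b, p a b * log (s b) = ∑ b, s b * log (s b) := by
      rw [Finset.sum_comm]
      simp only [← Finset.sum_mul, s]
    simp only [mul_add, mul_sub, Finset.sum_add_distrib, Finset.sum_sub_distrib, hs,
      ← Finset.sum_mul, negMulLog, neg_mul, Finset.sum_neg_distrib]
    ring
  linarith

section Entropy

variable {Ω E F G : Type*} [MeasurableSpace Ω] {μ : Measure Ω} [Fintype E] [Fintype F] [Fintype G]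

lemma entH_comp_of_injective (X : Ω → E) {g : E → F} (hg : g.Injective) :
    entH μ (fun ω => g (X ω)) = entH μ X := by
  refine (Fintype.sum_of_injective g hg _ _ (fun y hy => ?_) fun x => ?_).symm
  · have : (fun ω => g (X ω)) ⁻¹' {y} = ∅ :=
      Set.eq_empty_of_forall_notMem fun ω hω => hy ⟨X ω, hω⟩
    simp [this]
  · congr 3
    ext ω
    simp [hg.eq_iff]

lemma entH_const [IsProbabilityMeasure μ] (c : E) : entH μ (fun _ => c) = 0 := by
  classical
  refine Finset.sum_eq_zero fun e _ => ?_
  by_cases h : c = e <;> simp [h]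

variable [MeasurableSpace E] [MeasurableSingletonClass E]
  [MeasurableSpace F] [MeasurableSingletonClass F] {X : Ω → E} {Y : Ω → F}

lemma sum_measureReal_inter_preimage_singleton [IsFiniteMeasure μ] (hX : Measurable X)
    (s : Set Ω) : ∑ x, μ.real (s ∩ X ⁻¹' {x}) = μ.real s := by
  have h (x : E) : μ.real (s ∩ X ⁻¹' {x}) = (μ.restrict s).real (X ⁻¹' {x}) := by
    rw [measureReal_restrict_apply (hX (measurableSet_singleton x)), Set.inter_comm]
  simp only [h]
  rw [sum_measureReal_preimage_singleton _ fun x _ => hX (measurableSet_singleton x)]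
  simp

theorem condMutInf_nonneg [IsFiniteMeasure μ] (hX : Measurable X) (hY : Measurable Y)
    (Z : Ω → G) : 0 ≤ condMutInf μ X Y Z := by
  let p (z : G) (y : F) (x : E) : ℝ := μ.real (X ⁻¹' {x} ∩ (Y ⁻¹' {y} ∩ Z ⁻¹' {z}))
  have sum_x (z : G) (y : F) : ∑ x, p z y x = μ.real (Y ⁻¹' {y} ∩ Z ⁻¹' {z}) := by
    simp only [p, Set.inter_comm (X ⁻¹' _), sum_measureReal_inter_preimage_singleton hX]
  have sum_y (z : G) (x : E) : ∑ y, p z y x = μ.real (X ⁻¹' {x} ∩ Z ⁻¹' {z}) := by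
    simp only [p, Set.inter_comm (Y ⁻¹' _), ← Set.inter_assoc,
      sum_measureReal_inter_preimage_singleton hY]
  have sum_yx (z : G) : ∑ y, ∑ x, p z y x = μ.real (Z ⁻¹' {z}) := by
    simp only [sum_x, Set.inter_comm (Y ⁻¹' _), sum_measureReal_inter_preimage_singleton hY]
  have h := Finset.sum_le_sum fun z (_ : z ∈ Finset.univ) =>
    sum_negMulLog_add_negMulLog_sum_le (p := p z) fun _ _ => measureReal_nonneg
  simp only [sum_yx, Finset.sum_add_distrib] at h
  simp only [sum_x, sum_y, p] at h
  simp only [condMutInf, entH, Fintype.sum_prod_type_right, ← Set.singleton_prod_singleton,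
    Set.mk_preimage_prod, ← measureReal_def]
  linarith

lemma condEnt_nonneg [IsFiniteMeasure μ] (hX : Measurable X) (Z : Ω → G) :
    0 ≤ condEnt μ X Z := by
  have hdup : entH μ (fun ω => (X ω, X ω, Z ω)) = entH μ (fun ω => (X ω, Z ω)) :=
    entH_comp_of_injective (fun ω => (X ω, Z ω)) (g := fun v => (v.1, v.1, v.2))
      fun _ _ h => (Prod.mk.inj h).2
  have h := condMutInf_nonneg hX hX Z (μ := μ)
  unfold condMutInf at h
  unfold condEnt
  linarith

lemma mutInf_nonneg [IsProbabilityMeasure μ] (hX : Measurable X) (hY : Measurable Y) :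
    0 ≤ mutInf μ X Y := by
  have hX' : entH μ (fun ω => (X ω, ())) = entH μ X :=
    entH_comp_of_injective X (g := fun x => (x, ())) (Prod.mk_left_injective ())
  have hY' : entH μ (fun ω => (Y ω, ())) = entH μ Y :=
    entH_comp_of_injective Y (g := fun y => (y, ())) (Prod.mk_left_injective ())
  have hXY : entH μ (fun ω => (X ω, Y ω, ())) = entH μ (fun ω => (X ω, Y ω)) :=
    entH_comp_of_injective (fun ω => (X ω, Y ω)) (g := fun v => (v.1, v.2, ()))
      fun _ _ h => by simp_all [Prod.ext_iff]
  have h := condMutInf_nonneg hX hY (fun _ => ()) (μ := μ)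
  unfold condMutInf at h
  rw [hX', hY', hXY, entH_const] at h
  unfold mutInf
  linarith

-- Conditioning on `g ∘ Y`: `I(X : Y | g(Y)) = I(X : Y) - I(X : g(Y))`.
theorem mutInf_comp_le [IsFiniteMeasure μ] (hX : Measurable X) (hY : Measurable Y) (g : F → G) :
    mutInf μ X (fun ω => g (Y ω)) ≤ mutInf μ X Y := by
  have hY' : entH μ (fun ω => (Y ω, g (Y ω))) = entH μ Y :=
    entH_comp_of_injective Y (g := fun y => (y, g y)) fun _ _ h => (Prod.mk.inj h).1
  have hXY : entH μ (fun ω => (X ω, Y ω, g (Y ω))) = entH μ (fun ω => (X ω, Y ω)) :=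
    entH_comp_of_injective (fun ω => (X ω, Y ω)) (g := fun v => (v.1, v.2, g v.2))
      fun _ _ h => by simp_all [Prod.ext_iff]
  have h := condMutInf_nonneg hX hY (fun ω => g (Y ω)) (μ := μ)
  unfold condMutInf at h
  unfold mutInf
  linarith

lemma mutInf_eq_zero_of_indepFun [IsProbabilityMeasure μ] (hX : Measurable X) (hY : Measurable Y)
    (h : IndepFun X Y μ) : mutInf μ X Y = 0 := by
  have hprod (x : E) (y : F) :
      μ.real (X ⁻¹' {x} ∩ Y ⁻¹' {y}) = μ.real (X ⁻¹' {x}) * μ.real (Y ⁻¹' {y}) := by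
    simp only [measureReal_def, ← ENNReal.toReal_mul]
    rw [h.measure_inter_preimage_eq_mul _ _ (measurableSet_singleton x) (measurableSet_singleton y)]
  have hsumX : ∑ x, μ.real (X ⁻¹' {x}) = 1 := by
    simpa using sum_measureReal_inter_preimage_singleton hX Set.univ (μ := μ)
  have hsumY : ∑ y, μ.real (Y ⁻¹' {y}) = 1 := by
    simpa using sum_measureReal_inter_preimage_singleton hY Set.univ (μ := μ)
  simp only [mutInf, entH, Fintype.sum_prod_type, ← Set.singleton_prod_singleton,
    Set.mk_preimage_prod, ← measureReal_def, hprod, Real.negMulLog_mul, Finset.sum_add_distrib,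
    ← Finset.sum_mul, ← Finset.mul_sum, hsumX, hsumY]
  ring

theorem mutInf_add_mutInf_le_of_indepFun [IsProbabilityMeasure μ] (hX : Measurable X)
    (hY : Measurable Y) (h : IndepFun X Y μ) (Z : Ω → G) :
    mutInf μ X Z + mutInf μ Y Z ≤ mutInf μ (fun ω => (X ω, Y ω)) Z := by
  have hassoc : entH μ (fun ω => ((X ω, Y ω), Z ω)) = entH μ (fun ω => (X ω, Y ω, Z ω)) :=
    entH_comp_of_injective (fun ω => (X ω, Y ω, Z ω)) (g := fun v => ((v.1, v.2.1), v.2.2))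
      (Equiv.prodAssoc E F G).symm.injective
  have hXY := mutInf_eq_zero_of_indepFun hX hY h
  have hcond := condMutInf_nonneg hX hY Z (μ := μ)
  unfold condMutInf at hcond
  unfold mutInf at hXY ⊢
  linarith

theorem mutInf_prodMk_le_entH_of_indepFun [MeasurableSpace G] [MeasurableSingletonClass G]
    [IsProbabilityMeasure μ] {Z : Ω → G} (hX : Measurable X)
    (hY : Measurable Y) (hZ : Measurable Z) (h : IndepFun X Y μ) :
    mutInf μ X (fun ω => (Z ω, Y ω)) ≤ entH μ Z := by
  have hswap : entH μ (fun ω => (X ω, Z ω, Y ω)) = entH μ (fun ω => (Z ω, X ω, Y ω)) :=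
    entH_comp_of_injective (fun ω => (Z ω, X ω, Y ω)) (g := fun v => (v.2.1, v.1, v.2.2))
      fun _ _ h => by simp_all [Prod.ext_iff]
  have hXY := mutInf_eq_zero_of_indepFun hX hY h
  have hZY := mutInf_nonneg hZ hY (μ := μ)
  have hmono := condEnt_nonneg hZ (fun ω => (X ω, Y ω)) (μ := μ)
  unfold condEnt at hmono
  unfold mutInf at hXY hZY ⊢
  linarith

end Entropy

lemma indepFun_and_indepFun_prodMk_of_measure_inter_eq_mul {Ω E F G : Type*} [MeasurableSpace Ω]
    [MeasurableSpace E] [MeasurableSingletonClass E] [Countable E]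
    [MeasurableSpace F] [MeasurableSingletonClass F] [Countable F]
    [MeasurableSpace G] [MeasurableSingletonClass G] [Countable G]
    {μ : Measure Ω} [IsProbabilityMeasure μ] {X : Ω → E} {Y : Ω → F} {Z : Ω → G}
    (hX : Measurable X) (hY : Measurable Y) (hZ : Measurable Z)
    (h : ∀ x y z, μ (X ⁻¹' {x} ∩ Y ⁻¹' {y} ∩ Z ⁻¹' {z})
      = μ (X ⁻¹' {x}) * μ (Y ⁻¹' {y}) * μ (Z ⁻¹' {z})) :
    IndepFun X Y μ ∧ IndepFun (fun ω => (X ω, Y ω)) Z μ := by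
  have := Measure.isProbabilityMeasure_map hY.aemeasurable (μ := μ)
  have := Measure.isProbabilityMeasure_map hZ.aemeasurable (μ := μ)
  have hXYZ : μ.map (fun ω => ((X ω, Y ω), Z ω))
      = ((μ.map X).prod (μ.map Y)).prod (μ.map Z) := by
    refine Measure.ext_of_singleton fun ((x, y), z) => ?_
    rw [Measure.map_apply ((hX.prodMk hY).prodMk hZ) (measurableSet_singleton _)]
    simp only [← Set.singleton_prod_singleton, Set.mk_preimage_prod, Measure.prod_prod, h,
      Measure.map_apply hX, Measure.map_apply hY, Measure.map_apply hZ, measurableSet_singleton]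
  have hXY : μ.map (fun ω => (X ω, Y ω)) = (μ.map X).prod (μ.map Y) := by
    simpa [Measure.fst_map_prodMk hZ] using congrArg Measure.fst hXYZ
  exact ⟨(indepFun_iff_map_prod_eq_prod_map_map hX.aemeasurable hY.aemeasurable).2 hXY,
    (indepFun_iff_map_prod_eq_prod_map_map (hX.prodMk hY).aemeasurable hZ.aemeasurable).2
      (hXY ▸ hXYZ)⟩

theorem information_causality_inequality_general {Ω E1 E2 EA EZ F1 F2 : Type*} [MeasurableSpace Ω]
    [Fintype E1] [Fintype E2] [Finite EA] [Fintype EZ] [Fintype F1] [Fintype F2]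
    [MeasurableSpace E1] [MeasurableSingletonClass E1]
    [MeasurableSpace E2] [MeasurableSingletonClass E2]
    [MeasurableSpace EA] [MeasurableSingletonClass EA]
    [MeasurableSpace EZ] [MeasurableSingletonClass EZ]
    (μ : Measure Ω) [IsProbabilityMeasure μ]
    (X1 : Ω → E1) (X2 : Ω → E2) (A : Ω → EA) (Z : Ω → EZ)
    (hX1 : Measurable X1) (hX2 : Measurable X2) (hA : Measurable A) (hZ : Measurable Z)
    (hindep : ∀ (x1 : E1) (x2 : E2) (a : EA),
      μ (X1 ⁻¹' {x1} ∩ X2 ⁻¹' {x2} ∩ A ⁻¹' {a})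
        = μ (X1 ⁻¹' {x1}) * μ (X2 ⁻¹' {x2}) * μ (A ⁻¹' {a}))
    (g1 : EZ → EA → F1) (g2 : EZ → EA → F2) :
    mutInf μ X1 (fun ω => g1 (Z ω) (A ω)) + mutInf μ X2 (fun ω => g2 (Z ω) (A ω)) ≤ entH μ Z := by
  have := Fintype.ofFinite EA
  obtain ⟨hX1X2, hXA⟩ :=
    indepFun_and_indepFun_prodMk_of_measure_inter_eq_mul hX1 hX2 hA hindep
  let ZA : Ω → EZ × EA := fun ω => (Z ω, A ω)
  have hZA : Measurable ZA := hZ.prodMk hA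
  calc mutInf μ X1 (fun ω => g1 (Z ω) (A ω)) + mutInf μ X2 (fun ω => g2 (Z ω) (A ω))
      ≤ mutInf μ X1 ZA + mutInf μ X2 ZA :=
        add_le_add (mutInf_comp_le hX1 hZA g1.uncurry) (mutInf_comp_le hX2 hZA g2.uncurry)
    _ ≤ mutInf μ (fun ω => (X1 ω, X2 ω)) ZA := mutInf_add_mutInf_le_of_indepFun hX1 hX2 hX1X2 ZA
    _ ≤ entH μ Z := mutInf_prodMk_le_entH_of_indepFun (hX1.prodMk hX2) hA hZ hXA

/-- **Classical information causality inequality (two inputs)**: if `X1, X2, A` are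
mutually independent finite random variables, `Z = f (X1, X2, A)`,
`Y1 = g1 (Z, A)` and `Y2 = g2 (Z, A)`, then `I(X1:Y1) + I(X2:Y2) ≤ H(Z)`. -/
theorem information_causality_inequality {Ω E1 E2 EA EZ F1 F2 : Type*} [MeasurableSpace Ω]
    [Fintype E1] [Fintype E2] [Fintype EA] [Fintype EZ] [Fintype F1] [Fintype F2]
    [MeasurableSpace E1] [MeasurableSingletonClass E1]
    [MeasurableSpace E2] [MeasurableSingletonClass E2]
    [MeasurableSpace EA] [MeasurableSingletonClass EA]
    (μ : Measure Ω) [IsProbabilityMeasure μ]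
    (X1 : Ω → E1) (X2 : Ω → E2) (A : Ω → EA)
    (hX1 : Measurable X1) (hX2 : Measurable X2) (hA : Measurable A)
    (hindep : ∀ (x1 : E1) (x2 : E2) (a : EA),
      μ (X1 ⁻¹' {x1} ∩ X2 ⁻¹' {x2} ∩ A ⁻¹' {a})
        = μ (X1 ⁻¹' {x1}) * μ (X2 ⁻¹' {x2}) * μ (A ⁻¹' {a}))
    (f : E1 → E2 → EA → EZ) (g1 : EZ → EA → F1) (g2 : EZ → EA → F2)
    (Z : Ω → EZ) (Y1 : Ω → F1) (Y2 : Ω → F2)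
    (hZ : ∀ ω, Z ω = f (X1 ω) (X2 ω) (A ω))
    (hY1 : ∀ ω, Y1 ω = g1 (Z ω) (A ω)) (hY2 : ∀ ω, Y2 ω = g2 (Z ω) (A ω)) :
    mutInf μ X1 Y1 + mutInf μ X2 Y2 ≤ entH μ Z := by
  let : MeasurableSpace EZ := ⊤
  have hZ_meas : Measurable Z := by
    rw [funext hZ]
    exact (measurable_of_countable fun x : E1 × E2 × EA => f x.1 x.2.1 x.2.2).comp
      (hX1.prodMk (hX2.prodMk hA))
  rw [funext hY1, funext hY2]
  exact information_causality_inequality_general μ X1 X2 A Z hX1 hX2 hA hZ_meas hindep g1 g2
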